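/- arXiv:2502.12431 — 8 statements merged into one kernel-verified Lean document; each statement's English description precedes it below -/
import Mathlib

section
/- For any two-sided strategy-proof randomized matching mechanism f, there exists a randomized matching mechanism g that is two-sided strategy-proof and anonymous and satisfies Σ_{≻∈P} V(g(≻),≻) ≤ Σ_{≻∈P} V(f(≻),≻), where V(r,≻) denotes the stability violation of r at profile ≻. -/
/-!
The mechanism `g` is the average of `f` over all relabellings: for each pair of permutations
`π = (πS, πC)`, the twisted mechanism `twist f π` renames the agents by `π`, runs `f`, and renames
the outcome back; `anonymize f` is the uniform average of these.

Renaming agents is a symmetry of everything in sight, so each `twist f π` is again a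
strategy-proof randomized matching mechanism, and its violation at `p` is the violation of `f` at
the relabelled profile (`violation_relabel`). Being a randomized matching and being
strategy-proof are given by linear inequalities, so both survive averaging. Anonymity holds because
relabelling the argument only permutes the terms of the average. Finally, `violation p` is convex
(`violation_average_le`), and for fixed `π` relabelling permutes the set of profiles, so that
`twist f π` and `f` have the same total violation.
-/

open Finset

/-- A preference profile: each student `s` has a ranking `p.1 s : Equiv.Perm (Fin m)`
(where `p.1 s c` is the rank student `s` gives to school `c`, lower rank = more preferred),
and each school `c` has a ranking `p.2 c` of the students (lower rank = more preferred). -/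
abbrev Profile (n m : ℕ) :=
  (Fin n → Equiv.Perm (Fin m)) × (Fin m → Equiv.Perm (Fin n))

/-- A randomized matching: nonnegative entries, and (accounting for the implicit `∅`
row/column each summing to one) every row and column sums to at most one. -/
def IsRandMatching {n m : ℕ} (r : Fin n → Fin m → ℝ) : Prop :=
  (∀ s c, 0 ≤ r s c) ∧ (∀ s, ∑ c, r s c ≤ 1) ∧ (∀ c, ∑ s, r s c ≤ 1)

/-- Stability violation of a randomized matching `r` at profile `p`. -/
def violation {n m : ℕ} (p : Profile n m) (r : Fin n → Fin m → ℝ) : ℝ :=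
  ∑ s, ∑ c,
    max (1 - r s c
      - ∑ c' ∈ univ.filter (fun c' => p.1 s c' < p.1 s c), r s c'
      - ∑ s' ∈ univ.filter (fun s' => p.2 c s' < p.2 c s), r s' c) 0

/-- Two-sided strategy-proofness of a randomized matching mechanism. -/
def TwoSidedSP {n m : ℕ} (g : Profile n m → Fin n → Fin m → ℝ) : Prop :=
  (∀ p : Profile n m, ∀ s : Fin n, ∀ q : Equiv.Perm (Fin m), ∀ c : Fin m,
    ∑ c' ∈ univ.filter (fun c' => p.1 s c' ≤ p.1 s c),
        g (Function.update p.1 s q, p.2) s c'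
      ≤ ∑ c' ∈ univ.filter (fun c' => p.1 s c' ≤ p.1 s c), g p s c') ∧
  (∀ p : Profile n m, ∀ c : Fin m, ∀ q : Equiv.Perm (Fin n), ∀ s : Fin n,
    ∑ s' ∈ univ.filter (fun s' => p.2 c s' ≤ p.2 c s),
        g (p.1, Function.update p.2 c q) s' c
      ≤ ∑ s' ∈ univ.filter (fun s' => p.2 c s' ≤ p.2 c s), g p s' c)

/-- The relabelled profile `≻^π`: student `πS s` gets student `s`'s old preference with
schools renamed by `πC`, and school `πC c` gets school `c`'s old preference with students
renamed by `πS`. -/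
def relabel {n m : ℕ} (πS : Equiv.Perm (Fin n)) (πC : Equiv.Perm (Fin m))
    (p : Profile n m) : Profile n m :=
  (fun i => πC.symm.trans (p.1 (πS.symm i)),
   fun j => πS.symm.trans (p.2 (πC.symm j)))

/-- Anonymity of a mechanism. -/
def Anonymous {n m : ℕ} (g : Profile n m → Fin n → Fin m → ℝ) : Prop :=
  ∀ p : Profile n m, ∀ πS : Equiv.Perm (Fin n), ∀ πC : Equiv.Perm (Fin m), ∀ s c,
    g p s c = g (relabel πS πC p) (πS s) (πC c)

/-- `f` run on the profile relabelled by `π`, with the outcome pulled back to the original names. -/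
def twist {n m : ℕ} (f : Profile n m → Fin n → Fin m → ℝ)
    (π : Equiv.Perm (Fin n) × Equiv.Perm (Fin m)) : Profile n m → Fin n → Fin m → ℝ :=
  fun p s c => f (relabel π.1 π.2 p) (π.1 s) (π.2 c)

/-- The uniform average of a family of matrices indexed by pairs of permutations. -/
noncomputable def average {n m : ℕ}
    (r : Equiv.Perm (Fin n) × Equiv.Perm (Fin m) → Fin n → Fin m → ℝ) : Fin n → Fin m → ℝ :=
  fun s c => (Fintype.card (Equiv.Perm (Fin n) × Equiv.Perm (Fin m)) : ℝ)⁻¹ * ∑ π, r π s c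

/-- The average of `f` over all relabellings of the agents. -/
noncomputable def anonymize {n m : ℕ} (f : Profile n m → Fin n → Fin m → ℝ) :
    Profile n m → Fin n → Fin m → ℝ :=
  fun p => average fun π => twist f π p

lemma relabel_relabel {n m : ℕ} (a a' : Equiv.Perm (Fin n)) (b b' : Equiv.Perm (Fin m))
    (p : Profile n m) : relabel a b (relabel a' b' p) = relabel (a * a') (b * b') p := rfl

lemma relabel_bijective {n m : ℕ} (a : Equiv.Perm (Fin n)) (b : Equiv.Perm (Fin m)) :
    Function.Bijective (relabel a b : Profile n m → Profile n m) := by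
  refine Function.bijective_iff_has_inverse.mpr ⟨relabel a⁻¹ b⁻¹, fun p => ?_, fun p => ?_⟩
  · rw [relabel_relabel, inv_mul_cancel, inv_mul_cancel]; rfl
  · rw [relabel_relabel, mul_inv_cancel, mul_inv_cancel]; rfl

lemma relabel_update_fst {n m : ℕ} (a : Equiv.Perm (Fin n)) (b : Equiv.Perm (Fin m))
    (p : Profile n m) (s : Fin n) (q : Equiv.Perm (Fin m)) :
    relabel a b (Function.update p.1 s q, p.2)
      = (Function.update (relabel a b p).1 (a s) (b.symm.trans q), (relabel a b p).2) := by
  refine Prod.ext (funext fun i => ?_) rfl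
  by_cases h : i = a s
  · subst h; simp [relabel]
  · have h' : a.symm i ≠ s := fun e => h (by simp [← e])
    simp [relabel, h, h']

lemma relabel_update_snd {n m : ℕ} (a : Equiv.Perm (Fin n)) (b : Equiv.Perm (Fin m))
    (p : Profile n m) (c : Fin m) (q : Equiv.Perm (Fin n)) :
    relabel a b (p.1, Function.update p.2 c q)
      = ((relabel a b p).1, Function.update (relabel a b p).2 (b c) (a.symm.trans q)) := by
  refine Prod.ext rfl (funext fun j => ?_)
  by_cases h : j = b c
  · subst h; simp [relabel]
  · have h' : b.symm j ≠ c := fun e => h (by simp [← e])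
    simp [relabel, h, h']

lemma relabel_fst_apply {n m : ℕ} (a : Equiv.Perm (Fin n)) (b : Equiv.Perm (Fin m))
    (p : Profile n m) (s : Fin n) (c : Fin m) : (relabel a b p).1 (a s) (b c) = p.1 s c := by
  simp [relabel]

lemma relabel_snd_apply {n m : ℕ} (a : Equiv.Perm (Fin n)) (b : Equiv.Perm (Fin m))
    (p : Profile n m) (s : Fin n) (c : Fin m) : (relabel a b p).2 (b c) (a s) = p.2 c s := by
  simp [relabel]

/-- Reindexing of a filtered sum along a permutation. -/
lemma sum_filter_perm {k : ℕ} (e : Equiv.Perm (Fin k)) (P Q : Fin k → Prop)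
    [DecidablePred P] [DecidablePred Q] (h : ∀ i, P (e i) ↔ Q i) (F : Fin k → ℝ) :
    ∑ i ∈ univ.filter Q, F (e i) = ∑ i ∈ univ.filter P, F i := by
  rw [sum_filter, sum_filter, ← Equiv.sum_comp e (fun i => if P i then F i else 0)]
  exact sum_congr rfl fun i _ => by simp only [h]

lemma isRandMatching_twist {n m : ℕ} {f : Profile n m → Fin n → Fin m → ℝ}
    (hf : ∀ p, IsRandMatching (f p)) (π : Equiv.Perm (Fin n) × Equiv.Perm (Fin m))
    (p : Profile n m) : IsRandMatching (twist f π p) := by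
  obtain ⟨h0, h1, h2⟩ := hf (relabel π.1 π.2 p)
  refine ⟨fun s c => h0 _ _, fun s => ?_, fun c => ?_⟩
  · exact (Equiv.sum_comp π.2 fun c => f (relabel π.1 π.2 p) (π.1 s) c).trans_le (h1 _)
  · exact (Equiv.sum_comp π.1 fun s => f (relabel π.1 π.2 p) s (π.2 c)).trans_le (h2 _)

lemma twoSidedSP_twist {n m : ℕ} {f : Profile n m → Fin n → Fin m → ℝ}
    (hsp : TwoSidedSP f) (π : Equiv.Perm (Fin n) × Equiv.Perm (Fin m)) :
    TwoSidedSP (twist f π) := by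
  constructor
  · intro p s q c
    have h := hsp.1 (relabel π.1 π.2 p) (π.1 s) (π.2.symm.trans q) (π.2 c)
    rw [← relabel_update_fst] at h
    have hP : ∀ i, (relabel π.1 π.2 p).1 (π.1 s) (π.2 i) ≤ (relabel π.1 π.2 p).1 (π.1 s) (π.2 c)
        ↔ p.1 s i ≤ p.1 s c := fun i => by simp only [relabel_fst_apply]
    have key := fun F : Fin m → ℝ => sum_filter_perm π.2
      (fun i => (relabel π.1 π.2 p).1 (π.1 s) i ≤ (relabel π.1 π.2 p).1 (π.1 s) (π.2 c)) _ hP F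
    rwa [← key, ← key] at h
  · intro p c q s
    have h := hsp.2 (relabel π.1 π.2 p) (π.2 c) (π.1.symm.trans q) (π.1 s)
    rw [← relabel_update_snd] at h
    have hP : ∀ i, (relabel π.1 π.2 p).2 (π.2 c) (π.1 i) ≤ (relabel π.1 π.2 p).2 (π.2 c) (π.1 s)
        ↔ p.2 c i ≤ p.2 c s := fun i => by simp only [relabel_snd_apply]
    have key := fun F : Fin n → ℝ => sum_filter_perm π.1
      (fun i => (relabel π.1 π.2 p).2 (π.2 c) i ≤ (relabel π.1 π.2 p).2 (π.2 c) (π.1 s)) _ hP F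
    rwa [← key fun i => f (relabel π.1 π.2 (p.1, Function.update p.2 c q)) i (π.2 c),
      ← key fun i => f (relabel π.1 π.2 p) i (π.2 c)] at h

lemma violation_relabel {n m : ℕ} (f : Profile n m → Fin n → Fin m → ℝ)
    (π : Equiv.Perm (Fin n) × Equiv.Perm (Fin m)) (p : Profile n m) :
    violation p (twist f π p) = violation (relabel π.1 π.2 p) (f (relabel π.1 π.2 p)) := by
  unfold violation
  symm
  rw [← Equiv.sum_comp π.1]
  refine sum_congr rfl fun s _ => ?_
  rw [← Equiv.sum_comp π.2]
  refine sum_congr rfl fun c _ => ?_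
  have hP : ∀ i, (relabel π.1 π.2 p).1 (π.1 s) (π.2 i) < (relabel π.1 π.2 p).1 (π.1 s) (π.2 c)
      ↔ p.1 s i < p.1 s c := fun i => by simp only [relabel_fst_apply]
  have hQ : ∀ i, (relabel π.1 π.2 p).2 (π.2 c) (π.1 i) < (relabel π.1 π.2 p).2 (π.2 c) (π.1 s)
      ↔ p.2 c i < p.2 c s := fun i => by simp only [relabel_snd_apply]
  rw [← sum_filter_perm π.2
      (fun i => (relabel π.1 π.2 p).1 (π.1 s) i < (relabel π.1 π.2 p).1 (π.1 s) (π.2 c)) _ hP,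
    ← sum_filter_perm π.1
      (fun i => (relabel π.1 π.2 p).2 (π.2 c) i < (relabel π.1 π.2 p).2 (π.2 c) (π.1 s)) _ hQ
      (fun i => f (relabel π.1 π.2 p) i (π.2 c))]
  rfl

lemma card_inv_mul_card (n m : ℕ) :
    (Fintype.card (Equiv.Perm (Fin n) × Equiv.Perm (Fin m)) : ℝ)⁻¹
      * Fintype.card (Equiv.Perm (Fin n) × Equiv.Perm (Fin m)) = 1 :=
  inv_mul_cancel₀ (Nat.cast_ne_zero.mpr Fintype.card_ne_zero)

lemma sum_average_row {n m : ℕ}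
    (r : Equiv.Perm (Fin n) × Equiv.Perm (Fin m) → Fin n → Fin m → ℝ) (s : Fin n)
    (T : Finset (Fin m)) : ∑ c ∈ T, average r s c
      = (Fintype.card (Equiv.Perm (Fin n) × Equiv.Perm (Fin m)) : ℝ)⁻¹
        * ∑ π, ∑ c ∈ T, r π s c := by
  simp only [average]
  rw [← mul_sum, sum_comm]

lemma sum_average_col {n m : ℕ}
    (r : Equiv.Perm (Fin n) × Equiv.Perm (Fin m) → Fin n → Fin m → ℝ) (c : Fin m)
    (T : Finset (Fin n)) : ∑ s ∈ T, average r s c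
      = (Fintype.card (Equiv.Perm (Fin n) × Equiv.Perm (Fin m)) : ℝ)⁻¹
        * ∑ π, ∑ s ∈ T, r π s c := by
  simp only [average]
  rw [← mul_sum, sum_comm]

lemma mean_le_one {n m : ℕ} {x : Equiv.Perm (Fin n) × Equiv.Perm (Fin m) → ℝ}
    (h : ∀ π, x π ≤ 1) :
    (Fintype.card (Equiv.Perm (Fin n) × Equiv.Perm (Fin m)) : ℝ)⁻¹ * ∑ π, x π ≤ 1 := by
  rw [← card_inv_mul_card n m]
  refine mul_le_mul_of_nonneg_left ?_ (by positivity)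
  exact (sum_le_sum fun π _ => h π).trans_eq
    (by simp only [sum_const, nsmul_eq_mul, mul_one, card_univ])

lemma isRandMatching_average {n m : ℕ}
    {r : Equiv.Perm (Fin n) × Equiv.Perm (Fin m) → Fin n → Fin m → ℝ}
    (h : ∀ π, IsRandMatching (r π)) : IsRandMatching (average r) := by
  refine ⟨fun s c => ?_, fun s => ?_, fun c => ?_⟩
  · exact mul_nonneg (by positivity) (sum_nonneg fun π _ => (h π).1 s c)
  · rw [sum_average_row]
    exact mean_le_one fun π => (h π).2.1 s
  · rw [sum_average_col]
    exact mean_le_one fun π => (h π).2.2 c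

lemma twoSidedSP_anonymize {n m : ℕ} {f : Profile n m → Fin n → Fin m → ℝ}
    (hsp : TwoSidedSP f) : TwoSidedSP (anonymize f) := by
  constructor
  · intro p s q c
    unfold anonymize
    rw [sum_average_row, sum_average_row]
    exact mul_le_mul_of_nonneg_left
      (sum_le_sum fun π _ => (twoSidedSP_twist hsp π).1 p s q c) (by positivity)
  · intro p c q s
    unfold anonymize
    rw [sum_average_col, sum_average_col]
    exact mul_le_mul_of_nonneg_left
      (sum_le_sum fun π _ => (twoSidedSP_twist hsp π).2 p c q s) (by positivity)

/-- The terms of the average at `relabel πS πC p` are those at `p`, translated by `(πS, πC)` in the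
group of pairs of permutations. -/
lemma anonymous_anonymize {n m : ℕ} (f : Profile n m → Fin n → Fin m → ℝ) :
    Anonymous (anonymize f) := by
  intro p a b s c
  simp only [anonymize, average]
  rw [← Equiv.sum_comp (Equiv.mulRight (a, b))]
  rfl

/-- Convexity of the violation, for uniform averages. -/
lemma violation_average_le {n m : ℕ} (p : Profile n m)
    (r : Equiv.Perm (Fin n) × Equiv.Perm (Fin m) → Fin n → Fin m → ℝ) :
    violation p (average r)
      ≤ (Fintype.card (Equiv.Perm (Fin n) × Equiv.Perm (Fin m)) : ℝ)⁻¹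
        * ∑ π, violation p (r π) := by
  unfold violation
  conv_rhs => rw [sum_comm, mul_sum]
  refine sum_le_sum fun s _ => ?_
  conv_rhs => rw [sum_comm, mul_sum]
  refine sum_le_sum fun c _ => ?_
  rw [sum_average_row, sum_average_col]
  have hw := card_inv_mul_card n m
  have hw0 : 0 ≤ (Fintype.card (Equiv.Perm (Fin n) × Equiv.Perm (Fin m)) : ℝ)⁻¹ := by positivity
  refine max_le ?_ (mul_nonneg hw0 (sum_nonneg fun π _ => le_max_right _ _))
  refine le_trans (le_of_eq ?_)
    (mul_le_mul_of_nonneg_left (sum_le_sum fun π _ => le_max_left _ _) hw0)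
  simp only [sum_sub_distrib, mul_sub, sum_const, nsmul_eq_mul, mul_one, card_univ, hw, average]

/-- Theorem 1 (average-case): for any two-sided strategy-proof randomized matching
mechanism `f` there is a two-sided strategy-proof and anonymous randomized matching
mechanism `g` whose total stability violation over all profiles is no larger. -/
theorem anonymization_average (n m : ℕ) (f : Profile n m → Fin n → Fin m → ℝ)
    (hf : ∀ p, IsRandMatching (f p)) (hsp : TwoSidedSP f) :
    ∃ g : Profile n m → Fin n → Fin m → ℝ,
      (∀ p, IsRandMatching (g p)) ∧ TwoSidedSP g ∧ Anonymous g ∧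
      ∑ p : Profile n m, violation p (g p) ≤ ∑ p : Profile n m, violation p (f p) := by
  refine ⟨anonymize f, fun p => isRandMatching_average fun π => isRandMatching_twist hf π p,
    twoSidedSP_anonymize hsp, anonymous_anonymize f, ?_⟩
  have htotal : ∀ π : Equiv.Perm (Fin n) × Equiv.Perm (Fin m),
      ∑ p : Profile n m, violation p (twist f π p) = ∑ p : Profile n m, violation p (f p) := by
    intro π
    simp only [violation_relabel]
    exact (relabel_bijective π.1 π.2).sum_comp fun p => violation p (f p)
  refine (sum_le_sum fun p _ => violation_average_le p fun π => twist f π p).trans_eq ?_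
  rw [← mul_sum, sum_comm]
  simp only [htotal, sum_const, nsmul_eq_mul, card_univ]
  rw [← mul_assoc, card_inv_mul_card, one_mul]
end

section
/- Suppose n = m. For any two-sided strategy-proof randomized matching mechanism f, there exists a randomized matching mechanism g that is two-sided strategy-proof and symmetric and satisfies Σ_{≻∈P} V(g(≻),≻) ≤ Σ_{≻∈P} V(f(≻),≻), where V(r,≻) denotes the stability violation of r at profile ≻. -/
/-!
The mechanism `g` flips a fair coin between `f` and its mirror image, which runs `f` on the
role-swapped profile and transposes the outcome. The mirror of a two-sided strategy-proof
mechanism is again one, because the conditions for students and schools are exchanged; both the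
matching constraints and the strategy-proofness inequalities are linear, hence survive averaging.
Symmetry of the average holds because role swapping is an involution.

The violation is a sum of maxima of affine functions, hence convex in the matching
(`violation_half_le`), so the total violation of `g` is at most the mean of those of `f` and its
mirror. These two agree, since role swapping permutes the profiles (`sum_violation_mirror`).
-/

open Finset

/-- The role-swapped profile `≻↔` (students and schools exchange roles). -/
def swapProfile {n : ℕ} (p : Profile n n) : Profile n n := (p.2, p.1)

/-- Symmetry of a mechanism (for balanced markets). -/
def SymmetricMech {n : ℕ} (g : Profile n n → Fin n → Fin n → ℝ) : Prop :=
  ∀ p : Profile n n, ∀ i j, g p i j = g (swapProfile p) j i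

/-- The mirror of `f`: apply `f` to the role-swapped profile and transpose the result. -/
noncomputable def mirror {n : ℕ} (f : Profile n n → Fin n → Fin n → ℝ) :
    Profile n n → Fin n → Fin n → ℝ :=
  fun p i j => f (swapProfile p) j i

/-- The symmetrization of `f`: the fair coin flip between `f` and its mirror. -/
noncomputable def symmetrize {n : ℕ} (f : Profile n n → Fin n → Fin n → ℝ) :
    Profile n n → Fin n → Fin n → ℝ :=
  fun p i j => (f p i j + mirror f p i j) / 2

lemma sum_half {ι : Type*} (t : Finset ι) (a b : ι → ℝ) :
    ∑ i ∈ t, (a i + b i) / 2 = (∑ i ∈ t, a i + ∑ i ∈ t, b i) / 2 := by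
  rw [← Finset.sum_div, Finset.sum_add_distrib]

lemma isRandMatching_half {n m : ℕ} {a b : Fin n → Fin m → ℝ}
    (ha : IsRandMatching a) (hb : IsRandMatching b) :
    IsRandMatching (fun s c => (a s c + b s c) / 2) := by
  obtain ⟨ha0, har, hac⟩ := ha
  obtain ⟨hb0, hbr, hbc⟩ := hb
  refine ⟨fun s c => ?_, fun s => ?_, fun c => ?_⟩
  · have := ha0 s c
    have := hb0 s c
    positivity
  · rw [sum_half]
    linarith [har s, hbr s]
  · rw [sum_half]
    linarith [hac c, hbc c]

lemma isRandMatching_mirror {n : ℕ} {f : Profile n n → Fin n → Fin n → ℝ}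
    (hf : ∀ p, IsRandMatching (f p)) (p : Profile n n) : IsRandMatching (mirror f p) :=
  ⟨fun s c => (hf (swapProfile p)).1 c s, (hf (swapProfile p)).2.2, (hf (swapProfile p)).2.1⟩

/-- The two halves of strategy-proofness exchange roles under mirroring. -/
lemma twoSidedSP_mirror {n : ℕ} {f : Profile n n → Fin n → Fin n → ℝ}
    (hsp : TwoSidedSP f) : TwoSidedSP (mirror f) :=
  ⟨fun p => hsp.2 (swapProfile p), fun p => hsp.1 (swapProfile p)⟩

lemma twoSidedSP_half {n m : ℕ} {a b : Profile n m → Fin n → Fin m → ℝ}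
    (ha : TwoSidedSP a) (hb : TwoSidedSP b) :
    TwoSidedSP (fun p s c => (a p s c + b p s c) / 2) := by
  refine ⟨fun p s q c => ?_, fun p c q s => ?_⟩
  · rw [sum_half, sum_half]
    linarith [ha.1 p s q c, hb.1 p s q c]
  · rw [sum_half, sum_half]
    linarith [ha.2 p c q s, hb.2 p c q s]

/-- Midpoint convexity of the violation in the matching. -/
lemma violation_half_le {n m : ℕ} (p : Profile n m) (a b : Fin n → Fin m → ℝ) :
    violation p (fun s c => (a s c + b s c) / 2) ≤ (violation p a + violation p b) / 2 := by
  unfold violation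
  rw [← sum_half]
  refine Finset.sum_le_sum fun s _ => ?_
  rw [← sum_half]
  refine Finset.sum_le_sum fun c _ => ?_
  rw [sum_half, sum_half]
  apply max_le
  · refine le_trans (le_of_eq ?_) (div_le_div_of_nonneg_right
      (add_le_add (le_max_left _ 0) (le_max_left _ 0)) zero_le_two)
    ring
  · positivity

lemma violation_mirror {n : ℕ} (f : Profile n n → Fin n → Fin n → ℝ) (p : Profile n n) :
    violation p (mirror f p) = violation (swapProfile p) (f (swapProfile p)) := by
  unfold violation
  rw [Finset.sum_comm]
  refine Finset.sum_congr rfl fun s _ => Finset.sum_congr rfl fun c _ => ?_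
  rw [sub_right_comm]
  rfl

/-- Swapping roles permutes the profiles, so mirroring preserves the total violation. -/
lemma sum_violation_mirror {n : ℕ} (f : Profile n n → Fin n → Fin n → ℝ) :
    ∑ p : Profile n n, violation p (mirror f p) = ∑ p : Profile n n, violation p (f p) := by
  simp only [violation_mirror]
  exact (Equiv.prodComm (Fin n → Equiv.Perm (Fin n)) (Fin n → Equiv.Perm (Fin n))).sum_comp
    (fun p : Profile n n => violation p (f p))

/-- Theorem 2 (average-case): in a balanced market, for any two-sided strategy-proof
randomized matching mechanism `f` there is a two-sided strategy-proof and symmetric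
randomized matching mechanism `g` whose total stability violation is no larger. -/
theorem symmetrization_average (n : ℕ) (f : Profile n n → Fin n → Fin n → ℝ)
    (hf : ∀ p, IsRandMatching (f p)) (hsp : TwoSidedSP f) :
    ∃ g : Profile n n → Fin n → Fin n → ℝ,
      (∀ p, IsRandMatching (g p)) ∧ TwoSidedSP g ∧ SymmetricMech g ∧
      ∑ p : Profile n n, violation p (g p) ≤ ∑ p : Profile n n, violation p (f p) := by
  refine ⟨symmetrize f, fun p => isRandMatching_half (hf p) (isRandMatching_mirror hf p),
    twoSidedSP_half hsp (twoSidedSP_mirror hsp), fun p i j => ?_, ?_⟩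
  · simp only [symmetrize, mirror, swapProfile]
    rw [add_comm]
  · calc ∑ p : Profile n n, violation p (symmetrize f p)
        ≤ ∑ p : Profile n n, (violation p (f p) + violation p (mirror f p)) / 2 :=
          Finset.sum_le_sum fun p _ => violation_half_le p (f p) (mirror f p)
      _ = ∑ p : Profile n n, violation p (f p) := by
          rw [sum_half, sum_violation_mirror, add_self_div_two]
end

section
/- Suppose n = m. Let f be a two-sided strategy-proof randomized matching mechanism and define g by g(≻)(i,j) = ½·(f(≻)(i,j) + f(≻↔)(j,i)) for every profile ≻ and all i,j ∈ {1,…,n}. Then g is two-sided strategy-proof. -/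
open Finset

/-- Averaging a two-sided strategy-proof randomized matching mechanism with its
role-swapped, transposed version preserves two-sided strategy-proofness. -/
theorem symmetrized_mechanism_strategyproof (n : ℕ) (f : Profile n n → Fin n → Fin n → ℝ)
    (hf : ∀ p, IsRandMatching (f p)) (hsp : TwoSidedSP f)
    (g : Profile n n → Fin n → Fin n → ℝ)
    (hg : ∀ p i j, g p i j = (f p i j + f (swapProfile p) j i) / 2) :
    TwoSidedSP g := by
  refine ⟨fun p s q c => ?_, fun p c q s => ?_⟩
  · simp only [hg, ← Finset.sum_div, Finset.sum_add_distrib]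
    have h₁ := hsp.1 p s q c
    -- Student `s` plays the role of school `s` in the swapped profile.
    have h₂ := hsp.2 (swapProfile p) s q c
    exact div_le_div_of_nonneg_right (add_le_add h₁ h₂) zero_le_two
  · simp only [hg, ← Finset.sum_div, Finset.sum_add_distrib]
    have h₁ := hsp.2 p c q s
    -- School `c` plays the role of student `c` in the swapped profile.
    have h₂ := hsp.1 (swapProfile p) c q s
    exact div_le_div_of_nonneg_right (add_le_add h₁ h₂) zero_le_two
end

section
/- Let n = m = 2 and let g be the deterministic mechanism defined as follows: if at profile ≻ there is a pair (s,c) such that c is student s's most preferred school and s is school c's most preferred student, match s with c and match the remaining student with the remaining school; otherwise match student 1 with her most preferred school and match the remaining student with the remaining school. Then g is two-sided strategy-proof. -/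
/-!
With two students and two schools the mechanism has a choice-free description. If the students'
top schools differ, both students get their top school. If they share a top school `c`, then `c`
gets its own top student (`mech2_eq`). Every agent's share of weakly preferred partners is
an indicator, so strategy-proofness says that a misreport never yields a strictly better partner
(`sum_row`, `sum_col`). For students: when the tops differ, both already have their best school;
when they coincide, misreporting only forfeits the contested school. For schools: only the
contested school's report matters, and it already gets its top student. Both claims are verified by a
finite check over the sixteen profiles (`student_no_gain`, `school_no_gain`).
-/

open Finset

/-- Blocking pair for a deterministic matching `μ` (a bijection) at profile `p`. -/
abbrev IsBlocking {n : ℕ} (p : Profile n n) (μ : Equiv.Perm (Fin n)) (s c : Fin n) : Prop :=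
  p.1 s c < p.1 s (μ s) ∧ p.2 c s < p.2 c (μ.symm c)

/-- The 0–1 matrix encoding of a deterministic matching. -/
def permMatrix {n : ℕ} (μ : Equiv.Perm (Fin n)) : Fin n → Fin n → ℝ :=
  fun s c => if μ s = c then 1 else 0

/-- Algorithm 1 for the 2×2 market: if some student–school pair are each other's top
choice, match them (and the remaining pair); otherwise give student 1 (index 0) her top
choice and match the remaining pair. -/
noncomputable def mech2 (p : Profile 2 2) : Equiv.Perm (Fin 2) :=
  if h : ∃ s c, (p.1 s).symm 0 = c ∧ (p.2 c).symm 0 = s then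
    Equiv.swap h.choose h.choose_spec.choose
  else
    Equiv.swap 0 ((p.1 0).symm 0)

/-- The mechanism in closed form: it depends only on the top choices of the agents. -/
def closedMech (p : Profile 2 2) : Equiv.Perm (Fin 2) :=
  if (p.1 0).symm 0 = (p.1 1).symm 0 then
    Equiv.swap ((p.2 ((p.1 0).symm 0)).symm 0) ((p.1 0).symm 0)
  else
    Equiv.swap 0 ((p.1 0).symm 0)

/-- All mutual-top pairs induce the same matching, so the choice made in `mech2` is immaterial. -/
lemma swap_eq_closedMech (p : Profile 2 2) (s c : Fin 2)
    (h₁ : (p.1 s).symm 0 = c) (h₂ : (p.2 c).symm 0 = s) :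
    Equiv.swap s c = closedMech p := by
  revert p s c
  decide +kernel

lemma mech2_eq (p : Profile 2 2) : mech2 p = closedMech p := by
  unfold mech2
  split_ifs with h
  · exact swap_eq_closedMech p _ _ h.choose_spec.choose_spec.1 h.choose_spec.choose_spec.2
  · -- A shared top school would form a mutual-top pair with its own top student.
    have hne : (p.1 0).symm 0 ≠ (p.1 1).symm 0 := by
      intro he
      refine h ⟨(p.2 ((p.1 0).symm 0)).symm 0, (p.1 0).symm 0, ?_, rfl⟩
      generalize (p.2 ((p.1 0).symm 0)).symm 0 = s
      fin_cases s
      · rfl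
      · exact he.symm
    rw [closedMech, if_neg hne]

lemma sum_row (μ : Equiv.Perm (Fin 2)) (P : Fin 2 → Prop) [DecidablePred P] (s : Fin 2) :
    ∑ c ∈ univ.filter P, permMatrix μ s c = if P (μ s) then 1 else 0 := by
  simp [permMatrix, Finset.sum_ite_eq]

lemma sum_col (μ : Equiv.Perm (Fin 2)) (P : Fin 2 → Prop) [DecidablePred P] (c : Fin 2) :
    ∑ s ∈ univ.filter P, permMatrix μ s c = if P (μ.symm c) then 1 else 0 := by
  simp [permMatrix, ← Equiv.eq_symm_apply, Finset.sum_ite_eq']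

lemma ite_le_ite_of_imp {P Q : Prop} [Decidable P] [Decidable Q] (h : P → Q) :
    (if P then (1 : ℝ) else 0) ≤ if Q then 1 else 0 := by
  split_ifs <;> simp_all

lemma student_no_gain (p : Profile 2 2) (s : Fin 2) (q : Equiv.Perm (Fin 2)) :
    p.1 s (closedMech p s) ≤ p.1 s (closedMech (Function.update p.1 s q, p.2) s) := by
  revert p s q
  decide +kernel

lemma school_no_gain (p : Profile 2 2) (c : Fin 2) (q : Equiv.Perm (Fin 2)) :
    p.2 c ((closedMech p).symm c) ≤
      p.2 c ((closedMech (p.1, Function.update p.2 c q)).symm c) := by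
  revert p c q
  decide +kernel

/-- Algorithm 1 is two-sided strategy-proof. -/
theorem mech2_strategyproof : TwoSidedSP (fun p => permMatrix (mech2 p)) := by
  refine ⟨fun p s q c => ?_, fun p c q s => ?_⟩
  · simp only [sum_row, mech2_eq]
    exact ite_le_ite_of_imp (student_no_gain p s q).trans
  · simp only [sum_col, mech2_eq]
    exact ite_le_ite_of_imp (school_no_gain p c q).trans
end

section
/- For n = m = 2 there exists a deterministic matching mechanism that is simultaneously two-sided strategy-proof and stable (i.e., outputs a matching with no blocking pair at every profile). -/
/-!
The mechanism returns the identity matching when it is stable and the transposition otherwise.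
If the identity is blocked by a pair, that pair consists of two agents who both get their first
choice under the transposition, and every potential blocking pair of the transposition contains
one of them; so the outcome is always stable.

For strategy-proofness, an agent only cares whether the outcome is the identity. A truthful agent
who prefers the identity is in no blocking pair of it, so a misreport removes no blocking pair; a
misreport by an agent who prefers the transposition can only remove blocking pairs of
the identity. Hence no misreport improves the partner's rank (`student_rank_le`,
`school_rank_le`). For 0–1 matrices the dominance inequalities say exactly this, since the mass a
deterministic matching puts on an upper contour set is an indicator
(`sum_permMatrix_row`, `sum_permMatrix_col`).
-/

open Finset

/-- The identity matching if no pair blocks it, and the transposition otherwise. Only the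
off-diagonal pairs can block the identity. -/
def idFirst (p : Profile 2 2) : Equiv.Perm (Fin 2) :=
  if IsBlocking p 1 0 1 ∨ IsBlocking p 1 1 0 then Equiv.swap 0 1 else 1

lemma sum_permMatrix_row {n : ℕ} (μ : Equiv.Perm (Fin n)) (s : Fin n)
    (P : Fin n → Prop) [DecidablePred P] :
    ∑ c ∈ univ.filter P, permMatrix μ s c = if P (μ s) then 1 else 0 := by
  simp [permMatrix, Finset.sum_ite_eq]

lemma sum_permMatrix_col {n : ℕ} (μ : Equiv.Perm (Fin n)) (c : Fin n)
    (P : Fin n → Prop) [DecidablePred P] :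
    ∑ s ∈ univ.filter P, permMatrix μ s c = if P (μ.symm c) then 1 else 0 := by
  simp [permMatrix, ← Equiv.eq_symm_apply, Finset.sum_ite_eq']

lemma idFirst_stable (p : Profile 2 2) (s c : Fin 2) : ¬ IsBlocking p (idFirst p) s c := by
  unfold idFirst
  split_ifs with h
  · fin_cases s <;> fin_cases c <;> simp [IsBlocking] at h ⊢ <;> grind
  · fin_cases s <;> fin_cases c <;> simp [IsBlocking] at h ⊢ <;> grind

/-- No student obtains a better-ranked school by misreporting. -/
lemma student_rank_le (p : Profile 2 2) (s : Fin 2) (q : Equiv.Perm (Fin 2)) :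
    p.1 s (idFirst p s) ≤ p.1 s (idFirst (Function.update p.1 s q, p.2) s) := by
  unfold idFirst
  split_ifs with h h' h' <;> try exact le_rfl
  all_goals fin_cases s <;> simp [IsBlocking] at h h' ⊢ <;> grind

/-- No school obtains a better-ranked student by misreporting. -/
lemma school_rank_le (p : Profile 2 2) (c : Fin 2) (q : Equiv.Perm (Fin 2)) :
    p.2 c ((idFirst p).symm c) ≤
      p.2 c ((idFirst (p.1, Function.update p.2 c q)).symm c) := by
  unfold idFirst
  split_ifs with h h' h' <;> try exact le_rfl
  all_goals fin_cases c <;> simp [IsBlocking] at h h' ⊢ <;> grind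

/-- For the 2×2 market there exists a deterministic matching mechanism that is
two-sided strategy-proof and stable. -/
theorem exists_sp_stable_2x2 :
    ∃ g : Profile 2 2 → Equiv.Perm (Fin 2),
      TwoSidedSP (fun p => permMatrix (g p)) ∧
      ∀ p : Profile 2 2, ∀ s c, ¬ IsBlocking p (g p) s c := by
  refine ⟨idFirst, ⟨fun p s q c => ?_, fun p c q s => ?_⟩, idFirst_stable⟩
  · have h := student_rank_le p s q
    simp only [sum_permMatrix_row]
    split_ifs with h₁ h₂ <;> first | exact absurd (h.trans h₁) h₂ | norm_num
  · have h := school_rank_le p c q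
    simp only [sum_permMatrix_col]
    split_ifs with h₁ h₂ <;> first | exact absurd (h.trans h₁) h₂ | norm_num
end

section
/- Let n = m = 3 and let g be the deterministic mechanism defined as follows at profile ≻: first match student 1 with her most preferred school and remove both; among the remaining two students {s,s'} and two schools {c,c'}, if some remaining pair (s,c) satisfies c ≻_s c' and s ≻_c s' (where s' and c' are the other remaining student and school), match s with c and s' with c'; otherwise match student 2 with her preferred remaining school and student 3 with the last school. Then g is two-sided strategy-proof. -/
/-!
Once student 0 has taken her top school `t`, only two matchings of the rest are possible: the
straight one (students 1, 2 to schools `t + 1`, `t + 2`) and the crossed one. Each of the four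
remaining agents simply favours one of the two, and the mechanism is a vote between them: by
`mech3_eq` the straight matching is chosen iff it is favoured by students 1 and 2, or by
student 1 and school `t + 1`, or by student 2 and school `t + 2`. This condition is monotone in
each vote, so misreporting a vote never helps. Student 0 gets her top choice, and
school `t` is matched with student 0 whatever the schools report.

For deterministic mechanisms the stochastic dominance inequalities reduce to comparing the ranks
of the two partners obtained (`sum_row_le`, `sum_col_le`).
-/

open Finset

/-- Algorithm 2 for the 3×3 market.  Student 1 (index 0) is matched to her top choice
`t`; the remaining schools are `t+1` and `t+2` and the remaining students are indices
1 and 2.  If a remaining pair (s,c) mutually prefers each other to the other remaining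
student/school, match them (and the other pair); otherwise student 2 (index 1) gets her
preferred remaining school and student 3 (index 2) the last one. -/
def mech3 (p : Profile 3 3) : Fin 3 → Fin 3 :=
  let t := (p.1 0).symm 0
  let x := t + 1
  let y := t + 2
  if p.1 1 x < p.1 1 y ∧ p.2 x 1 < p.2 x 2 then ![t, x, y]
  else if p.1 1 y < p.1 1 x ∧ p.2 y 1 < p.2 y 2 then ![t, y, x]
  else if p.1 2 x < p.1 2 y ∧ p.2 x 2 < p.2 x 1 then ![t, y, x]
  else if p.1 2 y < p.1 2 x ∧ p.2 y 2 < p.2 y 1 then ![t, x, y]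
  else if p.1 1 x < p.1 1 y then ![t, x, y] else ![t, y, x]

/-- The 0–1 matrix encoding of a deterministic assignment. -/
def funMatrix {n : ℕ} (μ : Fin n → Fin n) : Fin n → Fin n → ℝ :=
  fun s c => if μ s = c then 1 else 0

/-- The condition under which `mech3` picks the straight matching when student 0 takes school `t`:
a monotone function of the votes for it, namely `p.1 1 (t + 1) < p.1 1 (t + 2)` (student 1),
`p.1 2 (t + 2) < p.1 2 (t + 1)` (student 2), `p.2 (t + 1) 1 < p.2 (t + 1) 2` (school `t + 1`) and
`p.2 (t + 2) 2 < p.2 (t + 2) 1` (school `t + 2`). -/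
def Straight (p : Profile 3 3) (t : Fin 3) : Prop :=
  (p.1 1 (t + 1) < p.1 1 (t + 2) ∧ p.1 2 (t + 2) < p.1 2 (t + 1)) ∨
  (p.1 1 (t + 1) < p.1 1 (t + 2) ∧ p.2 (t + 1) 1 < p.2 (t + 1) 2) ∨
  (p.1 2 (t + 2) < p.1 2 (t + 1) ∧ p.2 (t + 2) 2 < p.2 (t + 2) 1)

open Classical in
lemma mech3_eq (p : Profile 3 3) (t : Fin 3) (ht : (p.1 0).symm 0 = t) :
    mech3 p = if Straight p t then ![t, t + 1, t + 2] else ![t, t + 2, t + 1] := by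
  have hne : t + 1 ≠ t + 2 := by clear ht; revert t; decide
  have h1 : p.1 1 (t + 1) ≠ p.1 1 (t + 2) := (p.1 1).injective.ne hne
  have h2 : p.1 2 (t + 1) ≠ p.1 2 (t + 2) := (p.1 2).injective.ne hne
  have h3 : p.2 (t + 1) 1 ≠ p.2 (t + 1) 2 := (p.2 (t + 1)).injective.ne (by decide)
  have h4 : p.2 (t + 2) 1 ≠ p.2 (t + 2) 2 := (p.2 (t + 2)).injective.ne (by decide)
  simp only [mech3, Straight, ht]
  grind

lemma mech3_bijective (p : Profile 3 3) : Function.Bijective (mech3 p) := by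
  classical
  rw [mech3_eq p _ rfl]
  generalize (p.1 0).symm 0 = t
  split_ifs with h <;> clear h <;> revert t <;> decide

lemma sum_row_le {n : ℕ} {μ ν : Fin n → Fin n} {r : Equiv.Perm (Fin n)} {s : Fin n}
    (h : r (μ s) ≤ r (ν s)) (c : Fin n) :
    ∑ c' ∈ univ.filter (fun c' => r c' ≤ r c), funMatrix ν s c'
      ≤ ∑ c' ∈ univ.filter (fun c' => r c' ≤ r c), funMatrix μ s c' := by
  simp only [funMatrix, Finset.sum_ite_eq, Finset.mem_filter, Finset.mem_univ, true_and]
  split_ifs with h1 h2 <;> first | exact absurd (h.trans h1) h2 | norm_num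

lemma sum_col_le {n : ℕ} {μ ν : Fin n → Fin n} (hμ : μ.Bijective) (hν : ν.Bijective)
    {r : Equiv.Perm (Fin n)} {c : Fin n}
    (h : ∀ i j, μ i = c → ν j = c → r i ≤ r j) (s : Fin n) :
    ∑ s' ∈ univ.filter (fun s' => r s' ≤ r s), funMatrix ν s' c
      ≤ ∑ s' ∈ univ.filter (fun s' => r s' ≤ r s), funMatrix μ s' c := by
  obtain ⟨i, rfl⟩ := hμ.2 c
  obtain ⟨j, hj⟩ := hν.2 (μ i)
  have hij := h i j rfl hj
  simp only [funMatrix, ← hj, hν.1.eq_iff]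
  simp only [hj, hμ.1.eq_iff, Finset.sum_ite_eq', Finset.mem_filter, Finset.mem_univ, true_and]
  split_ifs with h1 h2 <;> first | exact absurd (hij.trans h1) h2 | norm_num

/-- No student gets a better school by misreporting. -/
lemma mech3_student (p : Profile 3 3) (s : Fin 3) (q : Equiv.Perm (Fin 3)) :
    p.1 s (mech3 p s) ≤ p.1 s (mech3 (Function.update p.1 s q, p.2) s) := by
  classical
  rw [mech3_eq p _ rfl]
  have hs : s = 0 ∨ s = 1 ∨ s = 2 := by revert s; decide
  rcases hs with rfl | rfl | rfl
  · split_ifs <;> simp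
  · rw [mech3_eq (Function.update p.1 1 q, p.2) ((p.1 0).symm 0) (by simp)]
    generalize (p.1 0).symm 0 = t
    by_cases h : Straight p t <;> by_cases h' : Straight (Function.update p.1 1 q, p.2) t <;>
      simp only [h, h', if_true, if_false, le_refl] <;> simp [Straight] at h h' ⊢ <;> grind
  · rw [mech3_eq (Function.update p.1 2 q, p.2) ((p.1 0).symm 0) (by simp)]
    generalize (p.1 0).symm 0 = t
    by_cases h : Straight p t <;> by_cases h' : Straight (Function.update p.1 2 q, p.2) t <;>
      simp only [h, h', if_true, if_false, le_refl] <;> simp [Straight] at h h' ⊢ <;> grind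

/-- No school gets a better student by misreporting: `i` and `j` are the students it receives under
the true and the false report. -/
lemma mech3_school (p : Profile 3 3) (c : Fin 3) (q : Equiv.Perm (Fin 3)) (i j : Fin 3)
    (hi : mech3 p i = c) (hj : mech3 (p.1, Function.update p.2 c q) j = c) :
    p.2 c i ≤ p.2 c j := by
  classical
  rw [mech3_eq p _ rfl] at hi
  rw [mech3_eq (p.1, Function.update p.2 c q) ((p.1 0).symm 0) rfl] at hj
  generalize (p.1 0).symm 0 = t at hi hj
  have fin3 : ∀ k : Fin 3, k = 0 ∨ k = 1 ∨ k = 2 := by decide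
  have h01 : t ≠ t + 1 := (by decide : ∀ t : Fin 3, t ≠ t + 1) t
  have h02 : t ≠ t + 2 := (by decide : ∀ t : Fin 3, t ≠ t + 2) t
  have h12 : t + 1 ≠ t + 2 := (by decide : ∀ t : Fin 3, t + 1 ≠ t + 2) t
  by_cases h : Straight p t <;>
    by_cases h' : Straight (p.1, Function.update p.2 c q) t <;>
    simp only [h, h', if_true, if_false] at hi hj <;>
    simp only [Straight] at h h' <;>
    rcases fin3 i with rfl | rfl | rfl <;> rcases fin3 j with rfl | rfl | rfl <;>
    simp at hi hj <;> grind

/-- Algorithm 2 is two-sided strategy-proof. -/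
theorem mech3_strategyproof : TwoSidedSP (fun p => funMatrix (mech3 p)) :=
  ⟨fun p s q c => sum_row_le (mech3_student p s q) c,
   fun p c q s => sum_col_le (mech3_bijective _) (mech3_bijective _) (mech3_school p c q) s⟩
end

section
/- Let n = m = 3 and let g be the deterministic mechanism defined as follows at profile ≻: first match student 1 with her most preferred school and remove both; among the remaining two students {s,s'} and two schools {c,c'}, if some remaining pair (s,c) satisfies c ≻_s c' and s ≻_c s', match s with c and s' with c'; otherwise match student 2 with her preferred remaining school and student 3 with the last school. Then at every profile ≻ the matching g(≻) has at most 2 blocking pairs. -/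
/-!
Student `0` holds her favourite school `t`, so she is in no blocking pair. The other two
students and two schools form a 2×2 market in which the mechanism picks a stable matching:
a mutually preferred pair is matched if there is one, and without such a pair student `1`
gets the school she prefers while student `2` cannot block with it, since that would be a
mutually preferred pair. Hence only `(1, t)` and `(2, t)` can block
(`mech3_blocking_top`).
-/

open Finset

/-- Every blocking pair involves the top school `t` of student `0`, and some student other
than `0`: student `0` holds her favourite school, and the matching of the other two students
with the other two schools is stable within that submarket. -/
lemma mech3_blocking_top (p : Profile 3 3) (e : Equiv.Perm (Fin 3))
    (he : ∀ i, e i = mech3 p i) (s c : Fin 3) (h : IsBlocking p e s c) :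
    s ≠ 0 ∧ c = (p.1 0).symm 0 := by
  obtain ⟨r, rfl⟩ := e.surjective c
  obtain ⟨h1, h2⟩ := h
  rw [Equiv.symm_apply_apply] at h2
  have hsr : s ≠ r := by rintro rfl; exact lt_irrefl _ h2
  have ht : p.1 0 ((p.1 0).symm 0) = 0 := Equiv.apply_symm_apply _ _
  have he0 : e 0 = (p.1 0).symm 0 := by
    rw [he, mech3]; split_ifs <;> rfl
  have hs : s ≠ 0 := by
    rintro rfl
    rw [he0, ht] at h1
    exact absurd h1 (Fin.not_lt_zero _)
  refine ⟨hs, ?_⟩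
  rw [← he0]
  by_cases hr : r = 0
  · rw [hr]
  exfalso
  have e1 := he 1
  have e2 := he 2
  -- What remains is `{s, r} = {1, 2}`, a blocking pair inside the submarket.
  have key : (s = 1 ∧ r = 2) ∨ (s = 2 ∧ r = 1) := by omega
  unfold mech3 at e1 e2
  rcases key with ⟨rfl, rfl⟩ | ⟨rfl, rfl⟩ <;> split_ifs at e1 e2 <;>
    simp only [Matrix.cons_val] at e1 e2 <;> rw [e1, e2] at h1 <;>
    first | rw [e1] at h2 | rw [e2] at h2
  all_goals grind

/-- At every profile, the matching produced by Algorithm 2 has at most 2 blocking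
pairs. -/
theorem mech3_at_most_two_blocking :
    ∀ p : Profile 3 3, ∀ e : Equiv.Perm (Fin 3), (∀ i, e i = mech3 p i) →
      {sc : Fin 3 × Fin 3 | IsBlocking p e sc.1 sc.2}.ncard ≤ 2 := by
  intro p e he
  have hsub : {sc : Fin 3 × Fin 3 | IsBlocking p e sc.1 sc.2} ⊆
      {((1 : Fin 3), (p.1 0).symm 0), ((2 : Fin 3), (p.1 0).symm 0)} := by
    rintro ⟨s, c⟩ h
    obtain ⟨hs, rfl⟩ := mech3_blocking_top p e he s c h
    have : s = 1 ∨ s = 2 := by omega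
    rcases this with rfl | rfl <;> simp
  exact (Set.ncard_le_ncard hsub (Set.toFinite _)).trans
    ((Set.ncard_insert_le _ _).trans (by rw [Set.ncard_singleton]))
end

section
/- For n = m = 3, every two-sided strategy-proof deterministic matching mechanism admits some preference profile at which its output matching has at least 2 blocking pairs; i.e., no two-sided strategy-proof deterministic mechanism has worst-case number of blocking pairs less than or equal to 1. -/
/-!
Suppose every output has at most one blocking pair. Then strategy-proofness links the outputs at any
two profiles that differ in the report of a single agent: that agent, judging by its ranking in
either of the two profiles, weakly prefers its partner there to its partner in the other one
(being unmatched comes last). So the mechanism would solve a finite constraint problem: choose, for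
each profile, a matching with at most one blocking pair, so that all these links hold.

Already 162 of the 46656 profiles make this problem unsolvable, and `refutation` records a
backtracking search that shows it. Its entries are the profiles on which to branch, in the order of
a depth-first traversal; at each of them every matching that has at most one blocking pair and is linked correctly
to the matchings chosen higher up on the branch is tried. `closes` replays the search and reports
whether all branches get closed, `not_consistent_of_closes` shows that this is sound for every
assignment of matchings that satisfies the constraints, and `closes_refutation` is the computation.
The rest translates between the real matrices of the mechanism and the numerical codes used by
the search: `exists_outcome` for the matchings, `few_of_ncard_lt` for blocking pairs and
`rank_le_of_agree` for strategy-proofness.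
-/

open Finset

/-- A deterministic matching output: 0–1 entries with at most one 1 in each row and
each column (agents may remain unmatched). -/
def IsDetOutput {n m : ℕ} (r : Fin n → Fin m → ℝ) : Prop :=
  (∀ s c, r s c = 0 ∨ r s c = 1) ∧ (∀ s, ∑ c, r s c ≤ 1) ∧ (∀ c, ∑ s, r s c ≤ 1)

/-- `(s,c)` blocks the deterministic output `r` at profile `p`: they are not matched
to each other, `s` prefers `c` to her assignment (or is unmatched), and `c` prefers
`s` to its assignment (or is unmatched). -/
def BlockingDet {n m : ℕ} (p : Profile n m) (r : Fin n → Fin m → ℝ)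
    (s : Fin n) (c : Fin m) : Prop :=
  r s c = 0 ∧ (∀ c', r s c' = 1 → p.1 s c < p.1 s c') ∧
    (∀ s', r s' c = 1 → p.2 c s < p.2 c s')

namespace BlockingSearch

/-! ### Codes for profiles and matchings -/

/-- The decimal digit of `k` at position `i`, where position `0` is the units digit. -/
def dig (i k : ℕ) : ℕ := k / 10 ^ i % 10

/-- The six rankings of three alternatives; entry `o` of the list is the rank of alternative `o`. -/
def ranks : ℕ → List ℕ
  | 0 => [0, 1, 2]
  | 1 => [0, 2, 1]
  | 2 => [1, 0, 2]
  | 3 => [2, 0, 1]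
  | 4 => [1, 2, 0]
  | _ => [2, 1, 0]

/-- The rank of alternative `o` in the ranking number `q`. The value `o = 3` stands for being
unmatched and gets the last rank `3`. -/
def rank (q o : ℕ) : ℕ := (ranks q).getD o 3

/-- The ranking number `q` as a permutation. -/
def toPerm : ℕ → Equiv.Perm (Fin 3)
  | 0 => 1
  | 1 => Equiv.swap 1 2
  | 2 => Equiv.swap 0 1
  | 3 => (finRotate 3)⁻¹
  | 4 => finRotate 3
  | _ => Equiv.swap 0 2

/-- The profile with code `p`: digit `s` of `p` is the number of the ranking of student `s`, and
digit `3 + c` that of school `c`. -/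
def prof (p : ℕ) : Profile 3 3 :=
  (fun s => toPerm (dig s p), fun c => toPerm (dig (3 + c) p))

/-- The codes of the 34 matchings: digit `s` is the school of student `s`, or `3` if `s` is
unmatched. -/
def outcomes : List ℕ :=
  [12, 13, 21, 23, 31, 32, 33, 102, 103, 120, 123, 130, 132, 133, 201, 203, 210, 213, 230, 231,
   233, 301, 302, 303, 310, 312, 313, 320, 321, 323, 330, 331, 332, 333]

/-- The student matched to school `c` in the matching `m`, or `3` if there is none. -/
def holder (m c : ℕ) : ℕ :=
  if dig 0 m = c then 0 else if dig 1 m = c then 1 else if dig 2 m = c then 2 else 3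

/-- The partner of agent `a` in the matching `m`, where the agents `0, 1, 2` are the students and
`3, 4, 5` the schools; `3` means unmatched. -/
def partner (m a : ℕ) : ℕ := if a < 3 then dig a m else holder m (a - 3)

/-- `m` is the code of the matching matrix `r`. -/
def Encodes (m : ℕ) (r : Fin 3 → Fin 3 → ℝ) : Prop :=
  m ∈ outcomes ∧ ∀ s c : Fin 3, r s c = 1 ↔ partner m s = c

/-! ### The search -/

/-- The pair `(s, c)` blocks the matching `m` at the profile `p`. -/
def blocks (p m : ℕ) (sc : Fin 3 × Fin 3) : Bool :=
  decide (rank (dig sc.1 p) sc.2 < rank (dig sc.1 p) (partner m sc.1)) &&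
    decide (rank (dig (3 + sc.2) p) sc.1 < rank (dig (3 + sc.2) p) (partner m (3 + sc.2)))

/-- All student-school pairs. -/
def pairs : List (Fin 3 × Fin 3) :=
  [(0, 0), (0, 1), (0, 2), (1, 0), (1, 1), (1, 2), (2, 0), (2, 1), (2, 2)]

/-- The matching `m` has at most one blocking pair at the profile `p`. -/
def few (p m : ℕ) : Bool := Nat.ble (pairs.filter (blocks p m)).length 1

/-- The profiles `p` and `p₂` agree except possibly in the ranking of agent `a`. -/
def agree (a p p₂ : ℕ) : Bool := [0, 1, 2, 3, 4, 5].all fun b => b == a || dig b p == dig b p₂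

/-- Agent `a`, with its ranking in `p`, weakly prefers its partner in `m` to that in `m₂`. -/
def prefers (a p m m₂ : ℕ) : Bool :=
  Nat.ble (rank (dig a p) (partner m a)) (rank (dig a p) (partner m₂ a))

/-- With `m` chosen at the profile `p` and `e.2` at the profile `e.1`: if the two profiles differ in
the report of one agent only, this agent gains by the change in neither direction. -/
def linked (p m : ℕ) (e : ℕ × ℕ) : Bool :=
  [0, 1, 2, 3, 4, 5].all fun a => !agree a p e.1 || prefers a p m e.2 && prefers a e.1 e.2 m

/-- The ways to extend the branch `path`, a list of profiles with chosen matchings, by a choice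
at the profile `p`. -/
def extensions (p : ℕ) (path : List (ℕ × ℕ)) : List (List (ℕ × ℕ)) :=
  (outcomes.filter fun m => few p m && path.all (linked p m)).map fun m => (p, m) :: path

/-- Depth-first search with a stack of open branches: each entry of the given list is the profile
on which the top branch is split. The result is `true` if no open branch is left at the end. -/
def closes : List ℕ → List (List (ℕ × ℕ)) → Bool
  | _, [] => true
  | [], _ :: _ => false
  | p :: ps, path :: stack => closes ps (extensions p path ++ stack)

/-- The profiles on which the search branches, in depth-first order. They were found by a
lookahead heuristic. -/
def refutation : List ℕ :=
  [210324, 212324, 212524, 212334, 212534, 212535, 212525, 312535, 312555, 212555, 312525,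
   312523, 312533, 212533, 212553, 12553, 312553, 212555, 212554, 210325, 210335, 210334, 210344,
   210345, 210355, 212325, 212324, 310325, 310324, 312324, 312325, 302324, 302524, 300324,
   302525, 302325, 302334, 300334, 300335, 310335, 310334, 310354, 310355, 300355, 300353,
   310353, 310333, 300333, 302335, 302333, 302323, 322324, 322334, 222334, 222324, 202324,
   222333, 222335, 322333, 322332, 222325, 322335, 322532, 320332, 202325, 322325, 322533,
   320532, 200325, 322523, 322525, 320533, 200324, 220325, 320523, 220533, 320525, 220324,
   220523, 220525, 220524, 220534, 320524, 320534, 222335, 22335, 22334, 302325, 302323, 302333,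
   312323, 312333, 212323, 202323, 202333, 202533, 212533, 312533, 312523, 302533, 302523,
   302533, 312325, 302324, 302325, 202325, 300325, 300324, 320325, 320324, 320335, 320334,
   320332, 220335, 220334, 320532, 220325, 220324, 320533, 320523, 220533, 320525, 220523,
   220525, 220524, 220534, 320524, 320534, 300323, 300333, 310323, 300335, 210323, 302335,
   200323, 302333, 200333, 302353, 202333, 202323, 202353, 310324, 300324, 300334, 310334,
   312334, 302334, 202334, 202324, 222324, 222334, 222334, 322334, 320334, 320324, 310334,
   210334, 210354, 310354, 12325, 10325, 2325, 325, 20325, 22325, 310324, 310334, 310534, 312334,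
   300534, 210534, 210334, 212334, 202334, 202324, 222324, 222334, 212324, 12324, 2324, 2334,
   22334, 22324, 200534, 220534, 320534, 210334, 200334, 300334, 320334, 220334, 212334, 212344,
   212345, 212355, 212335, 210335, 210333, 210345, 212333, 200333, 210343, 212343, 200323,
   202333, 200343, 202323, 202343, 312334, 310325, 310525, 312325, 312525, 212325, 212525,
   210325, 210525, 202525, 200525, 200524, 300524, 320524, 220524, 220525, 20525, 20524, 524,
   525, 2525, 12525, 310323, 300323, 300333, 310333, 310335, 312333, 302333, 302335, 302323,
   302325, 312323, 212323, 202323, 202333, 302535, 302533, 302553, 202533, 202523, 202553,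
   302533, 302525, 302523, 202533, 312523, 212533, 312533, 312335, 212335, 210325, 10325, 10324,
   325, 10334, 324, 10335, 10345, 335, 12345, 334, 12355, 2355, 2354, 2334, 2324, 2325, 12324,
   12325]

theorem closes_refutation : closes refutation [[]] = true := by
  decide +kernel

/-! ### Soundness of the search -/

/-- If the search closes all open branches, then no open branch agrees with an assignment `f` of
matchings to profiles that satisfies all constraints. -/
theorem not_consistent_of_closes (f : ℕ → ℕ) (hmem : ∀ p, f p ∈ outcomes)
    (hfew : ∀ p, few p (f p) = true)
    (hlink : ∀ a < 6, ∀ p p', agree a p p' = true → prefers a p (f p) (f p') = true) :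
    ∀ (ps : List ℕ) (stack : List (List (ℕ × ℕ))), closes ps stack = true →
      ∀ path ∈ stack, ¬ ∀ e ∈ path, e.2 = f e.1 := by
  intro ps
  induction ps with
  | nil =>
    intro stack h
    cases stack with
    | nil => simp
    | cons => simp [closes] at h
  | cons p ps ih =>
    intro stack h
    cases stack with
    | nil => simp
    | cons top rest =>
      have ih := ih _ h
      intro path hpath
      rcases List.mem_cons.1 hpath with rfl | hrest
      · intro hcons
        refine ih ((p, f p) :: path) (List.mem_append_left _ ?_) ?_
        · refine List.mem_map.2 ⟨f p, List.mem_filter.2 ⟨hmem p, ?_⟩, rfl⟩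
          rw [Bool.and_eq_true, List.all_eq_true]
          refine ⟨hfew p, fun e he => ?_⟩
          rw [linked, List.all_eq_true]
          intro a ha
          have ha6 : a < 6 := by simp at ha; omega
          cases hag : agree a p e.1 with
          | false => rfl
          | true =>
            have hag' : agree a e.1 p = true := by
              simp only [agree, List.all_eq_true, Bool.or_eq_true, beq_iff_eq] at hag ⊢
              exact fun b hb => (hag b hb).imp id Eq.symm
            rw [hcons e he]
            simp [hlink a ha6 _ _ hag, hlink a ha6 _ _ hag']
        · intro e he
          rcases List.mem_cons.1 he with rfl | he
          · rfl
          · exact hcons e he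
      · exact ih path (List.mem_append_right _ hrest)

/-! ### From matrices to codes -/

theorem rank_eq (q : ℕ) (o : Fin 3) : rank q o = (toPerm q o : ℕ) := by
  match q with
  | 0 | 1 | 2 | 3 | 4 => revert o; decide
  | _ + 5 =>
    change ([2, 1, 0] : List ℕ).getD o 3 = (Equiv.swap (0 : Fin 3) 2 o : ℕ)
    revert o; decide

theorem rank_le_three (q o : ℕ) : rank q o ≤ 3 := by
  match o with
  | 0 => exact (rank_eq q 0).trans_le (by omega)
  | 1 => exact (rank_eq q 1).trans_le (by omega)
  | 2 => exact (rank_eq q 2).trans_le (by omega)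
  | o + 3 => match q with
    | 0 | 1 | 2 | 3 | 4 | _ + 5 => simp [rank, ranks]

theorem rank_three (q : ℕ) : rank q 3 = 3 := by
  match q with
  | 0 | 1 | 2 | 3 | 4 | _ + 5 => rfl

theorem partner_lt_or_eq (m : ℕ) (hm : m ∈ outcomes) :
    ∀ a < 6, partner m a < 3 ∨ partner m a = 3 := by
  revert m; decide

theorem partner_school_iff (m : ℕ) (hm : m ∈ outcomes) :
    ∀ s c : Fin 3, partner m s = c ↔ partner m (3 + c) = s := by
  revert m; decide

theorem mem_outcomes {x y z : ℕ} (hx : x < 4) (hy : y < 4) (hz : z < 4) (hxy : x = y → x = 3)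
    (hxz : x = z → x = 3) (hyz : y = z → y = 3) : x + 10 * y + 100 * z ∈ outcomes := by
  interval_cases x <;> interval_cases y <;> interval_cases z <;> simp_all [outcomes]

/-- The position of the entry `1` of a 0–1 vector, or `3` if there is none. -/
theorem exists_position (u : Fin 3 → ℝ) (h01 : ∀ c, u c = 0 ∨ u c = 1) (hsum : ∑ c, u c ≤ 1) :
    ∃ x : ℕ, x < 4 ∧ ∀ c : Fin 3, u c = 1 ↔ x = c := by
  rw [Fin.sum_univ_three] at hsum
  rcases h01 0 with h0 | h0 <;> rcases h01 1 with h1 | h1 <;> rcases h01 2 with h2 | h2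
  · exact ⟨3, by simp, by simp [Fin.forall_fin_succ, h0, h1, h2]⟩
  · exact ⟨2, by simp, by simp [Fin.forall_fin_succ, h0, h1, h2]⟩
  · exact ⟨1, by simp, by simp [Fin.forall_fin_succ, h0, h1, h2]⟩
  · norm_num [h0, h1, h2] at hsum
  · exact ⟨0, by simp, by simp [Fin.forall_fin_succ, h0, h1, h2]⟩
  all_goals norm_num [h0, h1, h2] at hsum

theorem exists_outcome (r : Fin 3 → Fin 3 → ℝ) (hr : IsDetOutput r) : ∃ m, Encodes m r := by
  obtain ⟨h01, hrow, hcol⟩ := hr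
  choose x hx4 hx using fun s => exists_position (r s) (h01 s) (hrow s)
  choose y hy4 hy using fun c => exists_position (fun s => r s c) (fun s => h01 s c) (hcol c)
  have hinj : ∀ s t : Fin 3, s ≠ t → x s = x t → x s = 3 := by
    intro s t hst h
    by_contra hne
    have hlt : x s < 3 := by have := hx4 s; omega
    have h1 := (hy ⟨x s, hlt⟩ s).1 ((hx s ⟨x s, hlt⟩).2 rfl)
    have h2 := (hy ⟨x s, hlt⟩ t).1 ((hx t ⟨x s, hlt⟩).2 h.symm)
    exact hst (Fin.ext (h1.symm.trans h2))
  have h0 := hx4 0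
  have h1 := hx4 1
  have h2 := hx4 2
  refine ⟨x 0 + 10 * x 1 + 100 * x 2, mem_outcomes h0 h1 h2 (hinj 0 1 (by decide))
    (hinj 0 2 (by decide)) (hinj 1 2 (by decide)), fun s c => ?_⟩
  have hd : partner (x 0 + 10 * x 1 + 100 * x 2) s = x s := by
    fin_cases s <;> simp [partner, dig] <;> omega
  rw [hd, hx]

theorem few_of_ncard_lt {p m : ℕ} {r : Fin 3 → Fin 3 → ℝ} (h01 : ∀ s c, r s c = 0 ∨ r s c = 1)
    (hm : Encodes m r)
    (h : {sc : Fin 3 × Fin 3 | BlockingDet (prof p) r sc.1 sc.2}.ncard < 2) :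
    few p m = true := by
  have hsub : ((pairs.filter (blocks p m)).toFinset : Set (Fin 3 × Fin 3)) ⊆
      {sc : Fin 3 × Fin 3 | BlockingDet (prof p) r sc.1 sc.2} := by
    rintro ⟨s, c⟩ hsc
    have hb : blocks p m (s, c) = true := by
      simpa using (List.mem_filter.1 (List.mem_toFinset.1 hsc)).2
    simp only [blocks, Bool.and_eq_true, decide_eq_true_eq] at hb
    obtain ⟨hs, hc⟩ := hb
    refine ⟨(h01 s c).resolve_right fun h1 => ?_, fun c' h1 => ?_, fun s' h1 => ?_⟩
    · rw [(hm.2 s c).1 h1] at hs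
      exact lt_irrefl _ hs
    · rw [(hm.2 s c').1 h1, rank_eq, rank_eq] at hs
      exact hs
    · rw [(partner_school_iff m hm.1 s' c).1 ((hm.2 s' c).1 h1), rank_eq, rank_eq] at hc
      exact hc
  have hnodup : (pairs.filter (blocks p m)).Nodup := List.Nodup.filter _ (by decide)
  have hle := Set.ncard_le_ncard hsub (Set.toFinite _)
  rw [Set.ncard_coe_finset, List.toFinset_card_of_nodup hnodup] at hle
  exact Nat.ble_eq_true_of_le (by omega)

/-- Stochastic dominance of 0–1 vectors: if `u` dominates `v` and `v` hits alternative `c`, then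
`u` hits an alternative ranked at least as high. -/
theorem exists_le_of_dominates (σ : Equiv.Perm (Fin 3)) (u v : Fin 3 → ℝ)
    (hu : ∀ c, u c = 0 ∨ u c = 1) (hv : ∀ c, v c = 0 ∨ v c = 1) (c : Fin 3) (hc : v c = 1)
    (h : ∑ c' ∈ univ.filter (fun c' => σ c' ≤ σ c), v c' ≤
      ∑ c' ∈ univ.filter (fun c' => σ c' ≤ σ c), u c') :
    ∃ c', u c' = 1 ∧ σ c' ≤ σ c := by
  by_contra! hno
  have h0 : ∑ c' ∈ univ.filter (fun c' => σ c' ≤ σ c), u c' = 0 :=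
    Finset.sum_eq_zero fun c' hc' =>
      (hu c').resolve_right fun h1 => (hno c' h1).not_ge (Finset.mem_filter.1 hc').2
  have h1 : v c ≤ ∑ c' ∈ univ.filter (fun c' => σ c' ≤ σ c), v c' :=
    Finset.single_le_sum (f := v) (fun c' _ => by rcases hv c' with h | h <;> simp [h])
      (Finset.mem_filter.2 ⟨Finset.mem_univ c, le_rfl⟩)
  linarith

/-- The same comparison in terms of codes: `x` and `y` are the positions of the entry `1` in `u`
and `v`, or `3` if there is none. -/
theorem rank_le_of_dominates (q : ℕ) (u v : Fin 3 → ℝ) (x y : ℕ)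
    (hu : ∀ c, u c = 0 ∨ u c = 1) (hv : ∀ c, v c = 0 ∨ v c = 1)
    (hx : ∀ c : Fin 3, u c = 1 ↔ x = c) (hy : ∀ c : Fin 3, v c = 1 ↔ y = c)
    (hy3 : y < 3 ∨ y = 3)
    (h : ∀ c, ∑ c' ∈ univ.filter (fun c' => toPerm q c' ≤ toPerm q c), v c' ≤
      ∑ c' ∈ univ.filter (fun c' => toPerm q c' ≤ toPerm q c), u c') :
    rank q x ≤ rank q y := by
  rcases hy3 with hy3 | rfl
  · obtain ⟨c', hc', hle⟩ :=
      exists_le_of_dominates (toPerm q) u v hu hv ⟨y, hy3⟩ ((hy _).2 rfl) (h _)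
    rw [(hx c').1 hc', show y = ((⟨y, hy3⟩ : Fin 3) : ℕ) from rfl, rank_eq, rank_eq]
    exact hle
  · exact (rank_le_three q x).trans_eq (rank_three q).symm

theorem rank_le_of_agree (g : Profile 3 3 → Fin 3 → Fin 3 → ℝ)
    (hdet : ∀ p, IsDetOutput (g p)) (hsp : TwoSidedSP g) (f : ℕ → ℕ)
    (hf : ∀ p, Encodes (f p) (g (prof p))) (a : ℕ) (ha : a < 6) (p p' : ℕ)
    (h : agree a p p' = true) : prefers a p (f p) (f p') = true := by
  have hoff : ∀ b < 6, b ≠ a → dig b p' = dig b p := by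
    intro b hb hne
    simp only [agree, List.all_eq_true, Bool.or_eq_true, beq_iff_eq] at h
    exact ((h b (by simp; omega)).resolve_left hne).symm
  have hpart := partner_lt_or_eq (f p') (hf p').1 a ha
  refine Nat.ble_eq_true_of_le ?_
  by_cases ha3 : a < 3
  · obtain ⟨s, rfl⟩ : ∃ s : Fin 3, a = s := ⟨⟨a, ha3⟩, rfl⟩
    have hp' : prof p' = (Function.update (prof p).1 s (toPerm (dig s p')), (prof p).2) := by
      refine Prod.ext (funext fun t => ?_) (funext fun c => ?_)
      · by_cases hts : t = s
        · subst hts; simp [prof]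
        · have hne : (t : ℕ) ≠ s := fun h => hts (Fin.ext h)
          simp [prof, Function.update_of_ne hts, hoff t (by omega) hne]
      · simp [prof, hoff (3 + c) (by omega) (by omega)]
    refine rank_le_of_dominates _ (g (prof p) s) (g (prof p') s) _ _ ((hdet _).1 s)
      ((hdet _).1 s) ((hf p).2 s) ((hf p').2 s) hpart fun c => ?_
    rw [hp']
    exact hsp.1 (prof p) s _ c
  · obtain ⟨c, rfl⟩ : ∃ c : Fin 3, a = 3 + c := ⟨⟨a - 3, by omega⟩, by simp; omega⟩
    have hp' : prof p' = ((prof p).1, Function.update (prof p).2 c (toPerm (dig (3 + c) p'))) := by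
      refine Prod.ext (funext fun s => ?_) (funext fun t => ?_)
      · simp [prof, hoff s (by omega) (by omega)]
      · by_cases htc : t = c
        · subst htc; simp [prof]
        · have hne : (3 + t : ℕ) ≠ 3 + c := fun h => htc (Fin.ext (by omega))
          simp [prof, Function.update_of_ne htc, hoff (3 + t) (by omega) hne]
    have hcol : ∀ k, ∀ s : Fin 3, g (prof k) s c = 1 ↔ partner (f k) (3 + c) = s := fun k s =>
      ((hf k).2 s c).trans (partner_school_iff (f k) (hf k).1 s c)
    refine rank_le_of_dominates _ (fun s => g (prof p) s c) (fun s => g (prof p') s c) _ _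
      (fun s => (hdet _).1 s c) (fun s => (hdet _).1 s c) (hcol p) (hcol p') hpart fun s => ?_
    rw [hp']
    exact hsp.2 (prof p) c _ s

end BlockingSearch

/-- For the 3×3 market, every two-sided strategy-proof deterministic matching mechanism
has a profile at which its output has at least 2 blocking pairs. -/
theorem no_sp_deterministic_with_at_most_one_blocking
    (g : Profile 3 3 → Fin 3 → Fin 3 → ℝ)
    (hdet : ∀ p, IsDetOutput (g p)) (hsp : TwoSidedSP g) :
    ∃ p : Profile 3 3,
      2 ≤ {sc : Fin 3 × Fin 3 | BlockingDet p (g p) sc.1 sc.2}.ncard := by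
  by_contra! h
  choose f hf using fun p => BlockingSearch.exists_outcome (g (BlockingSearch.prof p)) (hdet _)
  refine BlockingSearch.not_consistent_of_closes f (fun p => (hf p).1)
    (fun p => BlockingSearch.few_of_ncard_lt (hdet _).1 (hf p) (h _))
    (BlockingSearch.rank_le_of_agree g hdet hsp f hf) _ _ BlockingSearch.closes_refutation []
    (by simp) (by simp)
end
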